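/- arXiv:2202.04339 — 2 statements merged into one kernel-verified Lean document; each statement's English description precedes it below -/
import Mathlib

section
/- Consider the dynamic discrete choice model with finite state space, and suppose |u(x,j)| ≤ ū < ∞ for all x ∈ X and j = 0,1,…,J. Let F be a probability distribution on ℝ^{J+1} with a density, with E_F|ε_j| < ∞ for all j, and such that for all j ≠ d the density of ε_j − ε_d under F is bounded by f̄ < ∞. Let F̃ be any probability distribution on ℝ^{J+1} with a density and finite first moments. Then, with C = max{1, ū + β(ū + Σ_{j=0}^J E_F|ε_j|)/(1−β)} / (1−β), the conditional choice probabilities satisfy sup_{d,x} |p(d|x;F) − p(d|x;F̃)| ≤ (4(J+1)βC f̄ + 1) · ρ(F,F̃). -/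
open MeasureTheory Real

/-!
The maximum over alternatives is `1`-Lipschitz for the sup norm, so the Bellman operator is a
`β`-contraction, and two solutions of the Bellman equation differ by at most `(1 - β)⁻¹` times the
change of the operator caused by the change of density. The values of the alternatives then move by
at most `β` times this amount. On the event that this move changes whether `d` is optimal, some
difference `ε_j - ε_d` with `j ≠ d` lies in a short interval, which has small probability under the
first density; the remaining change of density costs at most `ρ`.
-/

lemma setIntegral_le_add_sum_of_subset {α κ : Type*} [MeasurableSpace α] [Fintype κ]
    {ν : Measure α} {h : α → ℝ} (h_int : Integrable h ν) (h_nonneg : ∀ z, 0 ≤ h z)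
    {s t : Set α} {U : κ → Set α} (hst : s ⊆ t ∪ ⋃ k, U k) :
    ∫ z in s, h z ∂ν ≤ (∫ z in t, h z ∂ν) + ∑ k, ∫ z in U k, h z ∂ν := by
  have hle : ν.restrict s ≤ ν.restrict t + ∑ k, ν.restrict (U k) :=
    calc ν.restrict s ≤ ν.restrict (t ∪ ⋃ k, U k) := Measure.restrict_mono_set ν hst
      _ ≤ ν.restrict t + ν.restrict (⋃ k, U k) := Measure.restrict_union_le t _
      _ ≤ ν.restrict t + ∑ k, ν.restrict (U k) := by
        rw [← Measure.sum_fintype]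
        gcongr
        exact Measure.restrict_iUnion_le
  have hsum : Integrable h (∑ k, ν.restrict (U k)) :=
    integrable_finsetSum_measure.2 fun k _ => h_int.integrableOn
  calc ∫ z in s, h z ∂ν ≤ ∫ z, h z ∂(ν.restrict t + ∑ k, ν.restrict (U k)) :=
        integral_mono_measure hle (.of_forall h_nonneg) (h_int.restrict.add_measure hsum)
    _ = (∫ z in t, h z ∂ν) + ∑ k, ∫ z in U k, h z ∂ν := by
        rw [integral_add_measure h_int.integrableOn hsum,
          integral_finsetSum_measure fun k _ => h_int.integrableOn]

section Maximum

variable {ι : Type*} [Fintype ι] [Nonempty ι]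

/-- The value of the best alternative, when alternative `j` has value `v j`. -/
noncomputable def bestValue (v : ι → ℝ) : ℝ :=
  Finset.univ.sup' Finset.univ_nonempty v

lemma bestValue_le_bestValue_add_norm_sub (v w : ι → ℝ) :
    bestValue v ≤ bestValue w + ‖v - w‖ := by
  refine Finset.sup'_le _ _ fun j _ => ?_
  have hw : w j ≤ bestValue w := Finset.le_sup' w (Finset.mem_univ j)
  have hvw : v j - w j ≤ ‖v - w‖ := (le_abs_self _).trans (norm_le_pi_norm (v - w) j)
  linarith

lemma abs_bestValue_sub_bestValue_le (v w : ι → ℝ) :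
    |bestValue v - bestValue w| ≤ ‖v - w‖ := by
  have hvw := bestValue_le_bestValue_add_norm_sub v w
  have hwv := bestValue_le_bestValue_add_norm_sub w v
  rw [norm_sub_rev] at hwv
  exact abs_sub_le_iff.2 ⟨by linarith, by linarith⟩

lemma continuous_bestValue : Continuous (bestValue : (ι → ℝ) → ℝ) :=
  Continuous.finset_sup'_apply _ fun j _ => continuous_apply j

lemma abs_bestValue_add_le (v z : ι → ℝ) : |bestValue (v + z)| ≤ ‖v‖ + ∑ j, |z j| := by
  obtain ⟨i, -, hi⟩ := Finset.exists_mem_eq_sup' Finset.univ_nonempty (v + z)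
  calc |bestValue (v + z)| = |v i + z i| := congrArg abs hi
    _ ≤ |v i| + |z i| := abs_add_le _ _
    _ ≤ ‖v‖ + ∑ j, |z j| := add_le_add (norm_le_pi_norm v i)
        (Finset.single_le_sum (fun j _ => abs_nonneg (z j)) (Finset.mem_univ i))

end Maximum

section ShockDensity

variable {ι : Type*} [Fintype ι] {μ : Measure (ι → ℝ)} {f g : (ι → ℝ) → ℝ}

/-- `g` is the density, with respect to `μ`, of a distribution of the shocks `ε` with finite first
moments. -/
structure IsShockDensity (μ : Measure (ι → ℝ)) (g : (ι → ℝ) → ℝ) : Prop where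
  nonneg : ∀ z, 0 ≤ g z
  integrable : Integrable g μ
  integral_eq_one : ∫ z, g z ∂μ = 1
  integrable_abs_mul : ∀ j, Integrable (fun z => |z j| * g z) μ

/-- The sum `Σ_j E|ε_j|` of the absolute first moments of the density `g`. -/
noncomputable def absMoment (μ : Measure (ι → ℝ)) (g : (ι → ℝ) → ℝ) : ℝ :=
  ∑ j, ∫ z, |z j| * g z ∂μ

/-- The weighted `L¹` distance `ρ` between two densities. -/
noncomputable def shockDist (μ : Measure (ι → ℝ)) (f g : (ι → ℝ) → ℝ) : ℝ :=
  ∫ z, (1 + ∑ j, |z j|) * |f z - g z| ∂μ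

lemma shockDist_nonneg : 0 ≤ shockDist μ f g :=
  integral_nonneg fun z => by positivity

lemma integrable_add_sum_abs_mul (hg : Integrable g μ)
    (hmom : ∀ j, Integrable (fun z => |z j| * g z) μ) (B : ℝ) :
    Integrable (fun z => (B + ∑ j, |z j|) * g z) μ := by
  simp only [add_mul, Finset.sum_mul]
  exact (hg.const_mul B).add (integrable_finsetSum _ fun j _ => hmom j)

lemma IsShockDensity.integral_add_sum_abs_mul (hg : IsShockDensity μ g) (B : ℝ) :
    ∫ z, (B + ∑ j, |z j|) * g z ∂μ = B + absMoment μ g := by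
  simp only [add_mul, Finset.sum_mul]
  rw [integral_add (hg.integrable.const_mul B)
      (integrable_finsetSum _ fun j _ => hg.integrable_abs_mul j),
    integral_finsetSum _ fun j _ => hg.integrable_abs_mul j, integral_const_mul,
    hg.integral_eq_one, mul_one, absMoment]

lemma IsShockDensity.integrable_shockDist (hf : IsShockDensity μ f) (hg : IsShockDensity μ g) :
    Integrable (fun z => (1 + ∑ j, |z j|) * |f z - g z|) μ := by
  refine integrable_add_sum_abs_mul (hf.integrable.sub hg.integrable).abs (fun j => ?_) 1
  have habs := ((hf.integrable_abs_mul j).sub (hg.integrable_abs_mul j)).abs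
  simpa only [Pi.sub_apply, ← mul_sub, abs_mul, abs_abs] using habs

end ShockDensity

section Emax

variable {ι : Type*} [Fintype ι] [Nonempty ι] {μ : Measure (ι → ℝ)} {f g : (ι → ℝ) → ℝ}

/-- The expected value of the best alternative, when alternative `j` has value `v j + ε_j` and the
shocks `ε` have density `g` with respect to `μ`. -/
noncomputable def emax (μ : Measure (ι → ℝ)) (g : (ι → ℝ) → ℝ) (v : ι → ℝ) : ℝ :=
  ∫ z, bestValue (v + z) * g z ∂μ

lemma IsShockDensity.integrable_bestValue_mul (hg : IsShockDensity μ g) (v : ι → ℝ) :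
    Integrable (fun z => bestValue (v + z) * g z) μ := by
  have hcont : Continuous fun z : ι → ℝ => bestValue (v + z) :=
    continuous_bestValue.comp (continuous_const.add continuous_id)
  refine (integrable_add_sum_abs_mul hg.integrable hg.integrable_abs_mul ‖v‖).mono'
    (hcont.aestronglyMeasurable.mul hg.integrable.aestronglyMeasurable) (.of_forall fun z => ?_)
  rw [norm_mul, Real.norm_of_nonneg (hg.nonneg z)]
  exact mul_le_mul_of_nonneg_right (abs_bestValue_add_le v z) (hg.nonneg z)

lemma IsShockDensity.abs_emax_le (hg : IsShockDensity μ g) (v : ι → ℝ) :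
    |emax μ g v| ≤ ‖v‖ + absMoment μ g := by
  rw [← hg.integral_add_sum_abs_mul, ← Real.norm_eq_abs]
  refine norm_integral_le_of_norm_le
    (integrable_add_sum_abs_mul hg.integrable hg.integrable_abs_mul ‖v‖) (.of_forall fun z => ?_)
  rw [norm_mul, Real.norm_of_nonneg (hg.nonneg z)]
  exact mul_le_mul_of_nonneg_right (abs_bestValue_add_le v z) (hg.nonneg z)

lemma IsShockDensity.abs_emax_sub_emax_le_norm_sub (hg : IsShockDensity μ g) (v w : ι → ℝ) :
    |emax μ g v - emax μ g w| ≤ ‖v - w‖ := by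
  rw [emax, emax, ← integral_sub (hg.integrable_bestValue_mul v) (hg.integrable_bestValue_mul w),
    ← Real.norm_eq_abs]
  refine (norm_integral_le_of_norm_le (hg.integrable.const_mul ‖v - w‖)
    (.of_forall fun z => ?_)).trans_eq (by rw [integral_const_mul, hg.integral_eq_one, mul_one])
  rw [← sub_mul, norm_mul, Real.norm_of_nonneg (hg.nonneg z), ← add_sub_add_right_eq_sub v w z]
  exact mul_le_mul_of_nonneg_right (abs_bestValue_sub_bestValue_le _ _) (hg.nonneg z)

lemma IsShockDensity.abs_emax_sub_emax_le_mul_shockDist (hf : IsShockDensity μ f)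
    (hg : IsShockDensity μ g) (v : ι → ℝ) :
    |emax μ f v - emax μ g v| ≤ max 1 ‖v‖ * shockDist μ f g := by
  rw [emax, emax, shockDist, ← integral_const_mul,
    ← integral_sub (hf.integrable_bestValue_mul v) (hg.integrable_bestValue_mul v),
    ← Real.norm_eq_abs]
  refine norm_integral_le_of_norm_le ((hf.integrable_shockDist hg).const_mul _)
    (.of_forall fun z => ?_)
  have hweight : ‖v‖ + ∑ j, |z j| ≤ max 1 ‖v‖ * (1 + ∑ j, |z j|) := by
    have hsum : 0 ≤ ∑ j, |z j| := Finset.sum_nonneg fun j _ => abs_nonneg _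
    rw [mul_add, mul_one]
    exact add_le_add (le_max_right _ _) (le_mul_of_one_le_left hsum (le_max_left _ _))
  rw [← mul_sub, norm_mul, ← mul_assoc]
  exact mul_le_mul_of_nonneg_right ((abs_bestValue_add_le v z).trans hweight) (abs_nonneg _)

end Emax

section ChoiceProbability

variable {ι : Type*}

/-- The shocks for which alternative `d` is optimal, when alternative `j` has value `v j + ε_j`. -/
def optimalSet (v : ι → ℝ) (d : ι) : Set (ι → ℝ) :=
  {z | ∀ j, v j + z j ≤ v d + z d}

variable [Fintype ι] {μ : Measure (ι → ℝ)} {f g : (ι → ℝ) → ℝ}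

/-- The probability that alternative `d` is optimal, when alternative `j` has value `v j + ε_j` and
the shocks `ε` have density `g` with respect to `μ`. -/
noncomputable def choiceProb (μ : Measure (ι → ℝ)) (g : (ι → ℝ) → ℝ) (v : ι → ℝ) (d : ι) : ℝ :=
  ∫ z in optimalSet v d, g z ∂μ

/-- Under the density `g`, the differences `ε_j - ε_d` with `j ≠ d` have densities bounded by `c`;
this is encoded by the probabilities of compact intervals. -/
def HasDifferenceDensityLE (μ : Measure (ι → ℝ)) (g : (ι → ℝ) → ℝ) (c : ℝ) : Prop :=
  ∀ j d, j ≠ d → ∀ a b : ℝ, a ≤ b → ∫ z in {z | z j - z d ∈ Set.Icc a b}, g z ∂μ ≤ c * (b - a)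

lemma IsShockDensity.abs_choiceProb_sub_choiceProb_le_shockDist (hf : IsShockDensity μ f)
    (hg : IsShockDensity μ g) (v : ι → ℝ) (d : ι) :
    |choiceProb μ f v d - choiceProb μ g v d| ≤ shockDist μ f g := by
  have habs : Integrable (fun z => |f z - g z|) μ := (hf.integrable.sub hg.integrable).abs
  rw [choiceProb, choiceProb,
    ← integral_sub hf.integrable.integrableOn hg.integrable.integrableOn]
  calc |∫ z in optimalSet v d, (f z - g z) ∂μ|
      ≤ ∫ z in optimalSet v d, |f z - g z| ∂μ := abs_integral_le_integral_abs
    _ ≤ ∫ z, |f z - g z| ∂μ := setIntegral_le_integral habs (.of_forall fun z => abs_nonneg _)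
    _ ≤ shockDist μ f g := integral_mono habs (hf.integrable_shockDist hg) fun z =>
        le_mul_of_one_le_left (abs_nonneg _)
          (le_add_of_nonneg_right (Finset.sum_nonneg fun j _ => abs_nonneg _))

lemma optimalSet_subset {v w : ι → ℝ} {δ : ℝ} (hδ : ‖v - w‖ ≤ δ) (d : ι) :
    optimalSet v d ⊆ optimalSet w d ∪ ⋃ j : {j // j ≠ d},
      {z | z j - z d ∈ Set.Icc (w d - w j) (w d - w j + 2 * δ)} := by
  intro z hzv
  by_cases hzw : z ∈ optimalSet w d
  · exact .inl hzw
  obtain ⟨j, hj⟩ := not_forall.1 hzw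
  have hjd : j ≠ d := by
    rintro rfl
    exact hj le_rfl
  have hvj : v j + z j ≤ v d + z d := hzv j
  have hvw (i : ι) : |v i - w i| ≤ δ := (norm_le_pi_norm (v - w) i).trans hδ
  refine .inr (Set.mem_iUnion.2 ⟨⟨j, hjd⟩, ?_, ?_⟩)
  · linarith
  · linarith [neg_le_of_abs_le (hvw j), le_of_abs_le (hvw d)]

lemma IsShockDensity.choiceProb_le_choiceProb_add (hf : IsShockDensity μ f) {c : ℝ}
    (hc : HasDifferenceDensityLE μ f c) {v w : ι → ℝ} {δ : ℝ} (hδ : ‖v - w‖ ≤ δ) (d : ι) :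
    choiceProb μ f v d ≤ choiceProb μ f w d + (Fintype.card ι - 1) * (c * (2 * δ)) := by
  classical
  have hδ0 : 0 ≤ 2 * δ := mul_nonneg zero_le_two ((norm_nonneg _).trans hδ)
  have hcard : (Fintype.card {j // j ≠ d} : ℝ) = Fintype.card ι - 1 := by
    rw [Fintype.card_subtype_compl, Fintype.card_subtype_eq,
      Nat.cast_sub (Fintype.card_pos_iff.2 ⟨d⟩), Nat.cast_one]
  refine (setIntegral_le_add_sum_of_subset hf.integrable hf.nonneg
    (optimalSet_subset hδ d)).trans (add_le_add_right ?_ _)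
  rw [← hcard, ← nsmul_eq_mul]
  refine Finset.sum_le_card_nsmul _ _ _ fun j _ => ?_
  simpa only [add_sub_cancel_left] using
    hc j d j.2 (w d - w j) _ (le_add_of_nonneg_right hδ0)

lemma IsShockDensity.abs_choiceProb_sub_choiceProb_le_of_norm_sub_le (hf : IsShockDensity μ f)
    {c : ℝ} (hc : HasDifferenceDensityLE μ f c) {v w : ι → ℝ} {δ : ℝ} (hδ : ‖v - w‖ ≤ δ) (d : ι) :
    |choiceProb μ f v d - choiceProb μ f w d| ≤ (Fintype.card ι - 1) * (c * (2 * δ)) :=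
  abs_sub_le_iff.2 ⟨sub_le_iff_le_add'.2 (hf.choiceProb_le_choiceProb_add hc hδ d),
    sub_le_iff_le_add'.2 (hf.choiceProb_le_choiceProb_add hc (norm_sub_rev v w ▸ hδ) d)⟩

end ChoiceProbability

/-- A dynamic discrete choice model with finite state space `X` and alternatives `ι`, apart from
the distribution of the shocks. The probability of moving from `x` to `y` after choosing `j` is
`transition j x y`. -/
structure DynamicChoice (X ι : Type*) [Fintype X] where
  utility : X → ι → ℝ
  discount : ℝ
  transition : ι → X → X → ℝ
  discount_nonneg : 0 ≤ discount
  discount_lt_one : discount < 1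
  transition_nonneg : ∀ j x y, 0 ≤ transition j x y
  transition_sum : ∀ j x, ∑ y, transition j x y = 1

namespace DynamicChoice

variable {X ι : Type*} [Fintype X] (M : DynamicChoice X ι)

/-- The value `u(x,j) + β Σ_y G^j_{xy} Q(y)` of alternative `j` in state `x` net of its shock, when
the continuation value is `Q`. -/
def choiceValue (Q : X → ℝ) (x : X) (j : ι) : ℝ :=
  M.utility x j + M.discount * ∑ y, M.transition j x y * Q y

lemma abs_sum_transition_mul_le (Q : X → ℝ) (j : ι) (x : X) :
    |∑ y, M.transition j x y * Q y| ≤ ‖Q‖ := by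
  have hmem := (convex_closedBall (0 : ℝ) ‖Q‖).sum_mem
    (fun y _ => M.transition_nonneg j x y) (M.transition_sum j x)
    (fun y _ => mem_closedBall_zero_iff.2 (norm_le_pi_norm Q y))
  exact mem_closedBall_zero_iff.1 hmem

lemma le_div_one_sub_discount {a b : ℝ} (h : a ≤ b + M.discount * a) :
    a ≤ b / (1 - M.discount) := by
  rw [le_div_iff₀ (sub_pos.2 M.discount_lt_one)]
  linarith

/-- The constant `C`, which bounds the rate of change of the solution of the Bellman equation in
the distance `ρ`, when the utilities are bounded by `ubar` and `m = Σ_j E|ε_j|`. -/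
noncomputable def lipschitzConst (ubar m : ℝ) : ℝ :=
  max 1 (ubar + M.discount * (ubar + m) / (1 - M.discount)) / (1 - M.discount)

variable [Fintype ι]

lemma norm_choiceValue_sub_choiceValue_le (Q Q' : X → ℝ) (x : X) :
    ‖M.choiceValue Q x - M.choiceValue Q' x‖ ≤ M.discount * ‖Q - Q'‖ := by
  refine (pi_norm_le_iff_of_nonneg (mul_nonneg M.discount_nonneg (norm_nonneg _))).2 fun j => ?_
  have hsub : (M.choiceValue Q x - M.choiceValue Q' x) j =
      M.discount * ∑ y, M.transition j x y * (Q - Q') y := by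
    simp only [choiceValue, Pi.sub_apply, mul_sub, Finset.sum_sub_distrib]
    ring
  rw [hsub, norm_mul, Real.norm_of_nonneg M.discount_nonneg]
  exact mul_le_mul_of_nonneg_left (M.abs_sum_transition_mul_le _ j x) M.discount_nonneg

variable [Nonempty ι]

lemma norm_choiceValue_le {ubar : ℝ} {x : X} (hu : ∀ j, |M.utility x j| ≤ ubar) (Q : X → ℝ) :
    ‖M.choiceValue Q x‖ ≤ ubar + M.discount * ‖Q‖ := by
  refine (pi_norm_le_iff_of_nonempty _).2 fun j => (abs_add_le _ _).trans (add_le_add (hu j) ?_)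
  rw [abs_mul, abs_of_nonneg M.discount_nonneg]
  exact mul_le_mul_of_nonneg_left (M.abs_sum_transition_mul_le Q j x) M.discount_nonneg

/-- `Q` solves the Bellman equation of the model when the shocks have density `g` with respect
to `μ`. -/
def IsEmax (μ : Measure (ι → ℝ)) (g : (ι → ℝ) → ℝ) (Q : X → ℝ) : Prop :=
  ∀ x, Q x = emax μ g (M.choiceValue Q x)

variable {M} {μ : Measure (ι → ℝ)} {f g : (ι → ℝ) → ℝ} {Q Q' : X → ℝ} {ubar : ℝ}

lemma IsEmax.norm_le [Nonempty X] (hu : ∀ x j, |M.utility x j| ≤ ubar)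
    (hf : IsShockDensity μ f) (hQ : M.IsEmax μ f Q) :
    ‖Q‖ ≤ (ubar + absMoment μ f) / (1 - M.discount) := by
  refine M.le_div_one_sub_discount ((pi_norm_le_iff_of_nonempty _).2 fun x => ?_)
  rw [hQ x, Real.norm_eq_abs]
  linarith [hf.abs_emax_le (M.choiceValue Q x), M.norm_choiceValue_le (hu x) Q]

lemma IsEmax.norm_sub_le [Nonempty X] (hu : ∀ x j, |M.utility x j| ≤ ubar)
    (hf : IsShockDensity μ f) (hg : IsShockDensity μ g) (hQ : M.IsEmax μ f Q)
    (hQ' : M.IsEmax μ g Q') :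
    ‖Q - Q'‖ ≤ M.lipschitzConst ubar (absMoment μ f) * shockDist μ f g := by
  rw [lipschitzConst, div_mul_eq_mul_div]
  refine M.le_div_one_sub_discount ((pi_norm_le_iff_of_nonempty _).2 fun x => ?_)
  have hvalue : ‖M.choiceValue Q x‖ ≤
      ubar + M.discount * (ubar + absMoment μ f) / (1 - M.discount) := by
    rw [mul_div_assoc]
    exact (M.norm_choiceValue_le (hu x) Q).trans (add_le_add_right
      (mul_le_mul_of_nonneg_left (hQ.norm_le hu hf) M.discount_nonneg) _)
  rw [Pi.sub_apply, hQ x, hQ' x]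
  calc |emax μ f (M.choiceValue Q x) - emax μ g (M.choiceValue Q' x)|
      ≤ |emax μ f (M.choiceValue Q x) - emax μ g (M.choiceValue Q x)| +
        |emax μ g (M.choiceValue Q x) - emax μ g (M.choiceValue Q' x)| := abs_sub_le _ _ _
    _ ≤ max 1 (ubar + M.discount * (ubar + absMoment μ f) / (1 - M.discount)) * shockDist μ f g +
        M.discount * ‖Q - Q'‖ := add_le_add
        ((hf.abs_emax_sub_emax_le_mul_shockDist hg _).trans (mul_le_mul_of_nonneg_right
          (max_le_max_left 1 hvalue) shockDist_nonneg))
        ((hg.abs_emax_sub_emax_le_norm_sub _ _).trans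
          (M.norm_choiceValue_sub_choiceValue_le Q Q' x))

end DynamicChoice

theorem ccp_lipschitz_in_shock_distribution_general {X ι : Type*} [Fintype X] [Fintype ι]
    [Nonempty ι] (M : DynamicChoice X ι) {ubar : ℝ} (hu : ∀ x j, |M.utility x j| ≤ ubar)
    {μ : Measure (ι → ℝ)} {f g : (ι → ℝ) → ℝ} (hf : IsShockDensity μ f) (hg : IsShockDensity μ g)
    {c : ℝ} (hc : HasDifferenceDensityLE μ f c) {Q Q' : X → ℝ}
    (hQ : M.IsEmax μ f Q) (hQ' : M.IsEmax μ g Q') (d : ι) (x : X) :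
    |choiceProb μ f (M.choiceValue Q x) d - choiceProb μ g (M.choiceValue Q' x) d| ≤
      (2 * (Fintype.card ι - 1) * M.discount * M.lipschitzConst ubar (absMoment μ f) * c + 1) *
        shockDist μ f g := by
  have : Nonempty X := ⟨x⟩
  have hvalue : ‖M.choiceValue Q x - M.choiceValue Q' x‖ ≤
      M.discount * (M.lipschitzConst ubar (absMoment μ f) * shockDist μ f g) :=
    (M.norm_choiceValue_sub_choiceValue_le Q Q' x).trans
      (mul_le_mul_of_nonneg_left (hQ.norm_sub_le hu hf hg hQ') M.discount_nonneg)
  calc |choiceProb μ f (M.choiceValue Q x) d - choiceProb μ g (M.choiceValue Q' x) d|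
      ≤ |choiceProb μ f (M.choiceValue Q x) d - choiceProb μ f (M.choiceValue Q' x) d| +
        |choiceProb μ f (M.choiceValue Q' x) d - choiceProb μ g (M.choiceValue Q' x) d| :=
        abs_sub_le _ _ _
    _ ≤ (Fintype.card ι - 1) * (c * (2 *
          (M.discount * (M.lipschitzConst ubar (absMoment μ f) * shockDist μ f g)))) +
        shockDist μ f g := add_le_add
          (hf.abs_choiceProb_sub_choiceProb_le_of_norm_sub_le hc hvalue d)
          (hf.abs_choiceProb_sub_choiceProb_le_shockDist hg _ d)
    _ = _ := by ring

/-- Lipschitz continuity of the conditional choice probabilities in the distribution of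
shocks, in the distance `ρ(F,F̃) = ∫ (1 + Σ_j |ε_j|)|f(ε) − f̃(ε)| dε`. -/
theorem ccp_lipschitz_in_shock_distribution
    (K J : ℕ) (hK : 1 ≤ K)
    (u : Fin K → Fin (J + 1) → ℝ) (β : ℝ) (hβ0 : 0 ≤ β) (hβ1 : β < 1)
    (G : Fin (J + 1) → Fin K → Fin K → ℝ)
    (hGpos : ∀ d x y, 0 ≤ G d x y) (hGsum : ∀ d x, ∑ y, G d x y = 1)
    (ubar : ℝ) (hu : ∀ x j, |u x j| ≤ ubar)
    -- the density `f` of `F` and the density `ftil` of `F̃`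
    (f ftil : (Fin (J + 1) → ℝ) → ℝ)
    (hfmeas : Measurable f) (hfnonneg : ∀ z, 0 ≤ f z)
    (hfint : Integrable f) (hfprob : ∫ z, f z = 1)
    (hfmom : ∀ j, Integrable fun z : Fin (J + 1) → ℝ => |z j| * f z)
    (hgmeas : Measurable ftil) (hgnonneg : ∀ z, 0 ≤ ftil z)
    (hgint : Integrable ftil) (hgprob : ∫ z, ftil z = 1)
    (hgmom : ∀ j, Integrable fun z : Fin (J + 1) → ℝ => |z j| * ftil z)
    -- under `F`, the density of `ε_j − ε_d` is bounded by `fbar` for all `j ≠ d`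
    (fbar : ℝ) (hfbar0 : 0 ≤ fbar)
    (hfbar : ∀ j d : Fin (J + 1), j ≠ d → ∀ a b : ℝ, a ≤ b →
      ∫ z in {z : Fin (J + 1) → ℝ | z j - z d ∈ Set.Icc a b}, f z ≤ fbar * (b - a))
    -- `Q` and `Qt` solve the Bellman equations under `F` and `F̃`, respectively
    (Q Qt : Fin K → ℝ)
    (hQ : ∀ x, Q x = ∫ z : Fin (J + 1) → ℝ,
      (Finset.univ.sup' Finset.univ_nonempty
        (fun j : Fin (J + 1) => u x j + β * ∑ y, G j x y * Q y + z j)) * f z)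
    (hQt : ∀ x, Qt x = ∫ z : Fin (J + 1) → ℝ,
      (Finset.univ.sup' Finset.univ_nonempty
        (fun j : Fin (J + 1) => u x j + β * ∑ y, G j x y * Qt y + z j)) * ftil z)
    (C : ℝ)
    (hC : C = max 1 (ubar + β * (ubar + ∑ j, ∫ z : Fin (J + 1) → ℝ, |z j| * f z) / (1 - β))
      / (1 - β)) :
    ∀ (d : Fin (J + 1)) (x : Fin K),
      |(∫ z in {z : Fin (J + 1) → ℝ | ∀ j : Fin (J + 1),
            u x j + β * ∑ y, G j x y * Q y + z j ≤
              u x d + β * ∑ y, G d x y * Q y + z d}, f z) -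
        (∫ z in {z : Fin (J + 1) → ℝ | ∀ j : Fin (J + 1),
            u x j + β * ∑ y, G j x y * Qt y + z j ≤
              u x d + β * ∑ y, G d x y * Qt y + z d}, ftil z)| ≤
      (4 * (J + 1) * β * C * fbar + 1) *
        ∫ z : Fin (J + 1) → ℝ, (1 + ∑ j, |z j|) * |f z - ftil z| := by
  have hC0 : 0 ≤ C := hC ▸ div_nonneg (zero_le_one.trans (le_max_left _ _)) (sub_nonneg.2 hβ1.le)
  have hconst : 2 * ((Fintype.card (Fin (J + 1)) : ℝ) - 1) * β * C * fbar + 1 ≤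
      4 * (J + 1) * β * C * fbar + 1 := by
    rw [Fintype.card_fin, Nat.cast_succ]
    gcongr ?_ * _ * _ * _ + _
    linarith
  subst hC
  exact fun d x => (ccp_lipschitz_in_shock_distribution_general
    ⟨u, β, G, hβ0, hβ1, hGpos, hGsum⟩ hu ⟨hfnonneg, hfint, hfprob, hfmom⟩
    ⟨hgnonneg, hgint, hgprob, hgmom⟩ hfbar hQ hQt d x).trans
    (mul_le_mul_of_nonneg_right hconst shockDist_nonneg)
end

section
/- Let f be a probability density on ℝ^I satisfying the moment condition ∫ ‖μ‖₂ f(μ) dμ < ∞ and the smoothness condition |f(z+h) − f(z)| ≤ ‖h‖₂ L_f(z) e^{τ‖h‖₂} for all z, h ∈ ℝ^I, for some τ > 0 and an envelope function L_f : ℝ^I → [0,∞) with ∫ (1 + |z_i|) L_f(z) dz < ∞ for each i = 1,…,I. Then for any δ > 0 there exist m ∈ ℤ⁺, weights ω_j ∈ [0,1] with Σ_{j=1}^m ω_j = 1, locations μ_j ∈ ℝ^I (j = 1,…,m), and a common scale σ > 0 such that ρ(f, Σ_{j=1}^m ω_j φ(·; μ_j, σ)) < δ. -/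
open MeasureTheory Real

/-- The standardized univariate Gumbel density `φ(z) = exp(−z − γ − e^{−(z+γ)})`. -/
noncomputable def gumbelPdf (z : ℝ) : ℝ :=
  Real.exp (-z - Real.eulerMascheroniConstant - Real.exp (-(z + Real.eulerMascheroniConstant)))

/-- The multivariate Gumbel density `φ(z; μ, σ) = ∏_j (1/σ) φ((z_j − μ_j)/σ)`. -/
noncomputable def mGumbelPdf {J : ℕ} (μ : Fin J → ℝ) (σ : ℝ) (z : Fin J → ℝ) : ℝ :=
  ∏ j, (1 / σ) * gumbelPdf ((z j - μ j) / σ)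

/-- The Euclidean norm on `ℝ^I`. -/
noncomputable def euclNorm {I : ℕ} (z : Fin I → ℝ) : ℝ := Real.sqrt (∑ i, z i ^ 2)

/-!
A mixture of translates of `f` depends continuously on the random location: translation is
continuous in the weighted `L¹` norm, so pointwise convergence of dominated locations gives
convergence of the mixtures. This is used twice. Mixing `f` over the locations `σ • Z`, where `Z` is
Gumbel, and letting `σ → 0` shows that the convolutions of `f` with dilated Gumbel kernels converge
to `f`. Each such convolution is also a mixture of translates of the kernel with a random location
distributed as `f`; approximating that location by simple functions makes the mixture finite.
-/

open Filter Topology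
open scoped ENNReal

lemma one_add_enorm_eq_enorm {E : Type*} [SeminormedAddGroup E] (z : E) :
    1 + ‖z‖ₑ = ‖1 + ‖z‖‖ₑ := by
  rw [Real.enorm_of_nonneg (by positivity), ENNReal.ofReal_add zero_le_one (norm_nonneg z),
    ENNReal.ofReal_one, ofReal_norm]

section FirstMomentNorm

variable {E F : Type*} [NormedAddCommGroup E] [MeasurableSpace E] [NormedAddCommGroup F]

/-- The `L¹` norm with weight `1 + ‖z‖`, as an extended nonnegative real. On `ℝ^I` it is, for any
choice of norm, equivalent to the distance `ρ` applied to a difference of densities. -/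
noncomputable def firstMomentNorm (μ : Measure E) (f : E → F) : ℝ≥0∞ :=
  ∫⁻ z, (1 + ‖z‖ₑ) * ‖f z‖ₑ ∂μ

lemma lintegral_enorm_le_firstMomentNorm (μ : Measure E) (f : E → F) :
    ∫⁻ z, ‖f z‖ₑ ∂μ ≤ firstMomentNorm μ f :=
  lintegral_mono fun _ => le_mul_of_one_le_left' le_self_add

lemma lintegral_enorm_mul_enorm_le_firstMomentNorm (μ : Measure E) (f : E → F) :
    ∫⁻ z, ‖z‖ₑ * ‖f z‖ₑ ∂μ ≤ firstMomentNorm μ f :=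
  lintegral_mono fun _ => mul_le_mul_left le_add_self _

lemma integrable_of_firstMomentNorm_ne_top {μ : Measure E} {f : E → F}
    (hf : AEStronglyMeasurable f μ) (hfm : firstMomentNorm μ f ≠ ∞) : Integrable f μ :=
  ⟨hf, (lintegral_enorm_le_firstMomentNorm μ f).trans_lt hfm.lt_top⟩

lemma integrable_one_add_norm_smul_iff [BorelSpace E] [SecondCountableTopology E]
    [NormedSpace ℝ F] {μ : Measure E} {f : E → F} (hf : AEStronglyMeasurable f μ) :
    Integrable (fun z => (1 + ‖z‖) • f z) μ ↔ firstMomentNorm μ f ≠ ∞ := by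
  have hmeas : AEStronglyMeasurable (fun z => (1 + ‖z‖) • f z) μ :=
    (by fun_prop : AEStronglyMeasurable (fun z : E => 1 + ‖z‖) μ).smul hf
  simp only [Integrable, hmeas, true_and, hasFiniteIntegral_iff_enorm, enorm_smul,
    ← one_add_enorm_eq_enorm, firstMomentNorm, lt_top_iff_ne_top]

lemma firstMomentNorm_add_le [BorelSpace E] {μ : Measure E} {f : E → F}
    (hf : AEStronglyMeasurable f μ) (g : E → F) :
    firstMomentNorm μ (f + g) ≤ firstMomentNorm μ f + firstMomentNorm μ g := by
  rw [firstMomentNorm, firstMomentNorm, firstMomentNorm, ← lintegral_add_left' (by fun_prop)]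
  refine lintegral_mono fun z => ?_
  rw [← mul_add]
  exact mul_le_mul_right (enorm_add_le _ _) _

lemma firstMomentNorm_neg (μ : Measure E) (f : E → F) :
    firstMomentNorm μ (-f) = firstMomentNorm μ f := by
  simp only [firstMomentNorm, Pi.neg_apply, enorm_neg]

lemma firstMomentNorm_sub_le [BorelSpace E] {μ : Measure E} {f : E → F}
    (hf : AEStronglyMeasurable f μ) (g : E → F) :
    firstMomentNorm μ (f - g) ≤ firstMomentNorm μ f + firstMomentNorm μ g := by
  simpa only [sub_eq_add_neg, firstMomentNorm_neg] using firstMomentNorm_add_le hf (-g)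

lemma firstMomentNorm_translate_le [BorelSpace E] {μ : Measure E}
    [μ.IsAddRightInvariant] (f : E → F) (y : E) :
    firstMomentNorm μ (fun z => f (z - y)) ≤ (1 + ‖y‖ₑ) * firstMomentNorm μ f := by
  calc firstMomentNorm μ (fun z => f (z - y))
      = ∫⁻ z, (1 + ‖z + y‖ₑ) * ‖f z‖ₑ ∂μ := by
        simpa [firstMomentNorm] using
          lintegral_sub_right_eq_self (μ := μ) (fun z => (1 + ‖z + y‖ₑ) * ‖f z‖ₑ) y
    _ ≤ ∫⁻ z, (1 + ‖y‖ₑ) * ((1 + ‖z‖ₑ) * ‖f z‖ₑ) ∂μ := by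
        refine lintegral_mono fun z => ?_
        rw [← mul_assoc]
        gcongr
        calc 1 + ‖z + y‖ₑ ≤ 1 + (‖z‖ₑ + ‖y‖ₑ) := by gcongr; exact enorm_add_le z y
          _ ≤ 1 + (‖z‖ₑ + ‖y‖ₑ) + ‖y‖ₑ * ‖z‖ₑ := le_self_add
          _ = (1 + ‖y‖ₑ) * (1 + ‖z‖ₑ) := by ring
    _ = (1 + ‖y‖ₑ) * firstMomentNorm μ f := lintegral_const_mul' _ _ (by finiteness)

lemma firstMomentNorm_translate_ne_top [BorelSpace E] {μ : Measure E}
    [μ.IsAddRightInvariant] {f : E → F} (hfm : firstMomentNorm μ f ≠ ∞) (y : E) :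
    firstMomentNorm μ (fun z => f (z - y)) ≠ ∞ :=
  ne_top_of_le_ne_top (by finiteness) (firstMomentNorm_translate_le f y)

lemma tendsto_lintegral_enorm_translate_sub [BorelSpace E]
    {μ : Measure E} [μ.IsAddLeftInvariant] [IsLocallyFiniteMeasure μ] [μ.InnerRegularCompactLTTop]
    {f : E → F} (hf : Integrable f μ) :
    Tendsto (fun y => ∫⁻ z, ‖f (z - y) - f z‖ₑ ∂μ) (𝓝 0) (𝓝 0) := by
  have hfLp : MemLp f 1 μ := memLp_one_iff_integrable.2 hf
  have : Fact ((1 : ℝ≥0∞) ≠ ∞) := ⟨ENNReal.one_ne_top⟩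
  have hcont : Continuous fun y : E => DomAddAct.mk (-y) +ᵥ hfLp.toLp f :=
    (DomAddAct.continuous_mk.comp continuous_neg).vadd continuous_const
  have hedist (y : E) : edist (DomAddAct.mk (-y) +ᵥ hfLp.toLp f) (hfLp.toLp f) =
      ∫⁻ z, ‖f (z - y) - f z‖ₑ ∂μ := by
    rw [DomAddAct.mk_vadd_toLp, Lp.edist_toLp_toLp, eLpNorm_one_eq_lintegral_enorm]
    simp only [Pi.sub_apply, vadd_eq_add, neg_add_eq_sub]
  simpa only [hedist, sub_zero, sub_self, enorm_zero, lintegral_zero] using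
    (hcont.edist (continuous_const (y := hfLp.toLp f))).tendsto (0 : E)

-- The weight is `1`-Lipschitz, so this reduces to continuity of translation in the unweighted `L¹`
-- at the function `(1 + ‖·‖) • f`.
lemma tendsto_firstMomentNorm_translate_sub_self [BorelSpace E] [SecondCountableTopology E]
    [NormedSpace ℝ F] {μ : Measure E} [μ.IsAddLeftInvariant] [IsLocallyFiniteMeasure μ]
    [μ.InnerRegularCompactLTTop] {f : E → F} (hf : StronglyMeasurable f)
    (hfm : firstMomentNorm μ f ≠ ∞) :
    Tendsto (fun y => firstMomentNorm μ fun z => f (z - y) - f z) (𝓝 0) (𝓝 0) := by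
  set g : E → F := fun z => (1 + ‖z‖) • f z
  have hg : Integrable g μ := (integrable_one_add_norm_smul_iff hf.aestronglyMeasurable).2 hfm
  have hfint : ∫⁻ z, ‖f z‖ₑ ∂μ ≠ ∞ :=
    ne_top_of_le_ne_top hfm (lintegral_enorm_le_firstMomentNorm μ f)
  have hpoint (y z : E) : (1 + ‖z‖ₑ) * ‖f (z - y) - f z‖ₑ ≤
      ‖g (z - y) - g z‖ₑ + ‖y‖ₑ * ‖f (z - y)‖ₑ := by
    have hsplit : (1 + ‖z‖) • (f (z - y) - f z) =
        (g (z - y) - g z) + (‖z‖ - ‖z - y‖) • f (z - y) := by simp only [g]; module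
    have hlip : ‖‖z‖ - ‖z - y‖‖ₑ ≤ ‖y‖ₑ := by
      rw [enorm_le_iff_norm_le]
      simpa using abs_norm_sub_norm_le z (z - y)
    rw [one_add_enorm_eq_enorm, ← enorm_smul, hsplit]
    refine (enorm_add_le _ _).trans ?_
    rw [enorm_smul]
    gcongr
  have hbound (y : E) : firstMomentNorm μ (fun z => f (z - y) - f z) ≤
      ∫⁻ z, ‖g (z - y) - g z‖ₑ ∂μ + ‖y‖ₑ * ∫⁻ z, ‖f z‖ₑ ∂μ := by
    have hmeas : Measurable fun z => ‖y‖ₑ * ‖f (z - y)‖ₑ :=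
      (hf.comp_measurable (measurable_id.sub_const y)).enorm.const_mul _
    refine (lintegral_mono (hpoint y)).trans_eq ?_
    rw [lintegral_add_right _ hmeas, lintegral_const_mul' _ _ enorm_ne_top,
      lintegral_sub_right_eq_self (fun z => ‖f z‖ₑ) y]
  have hlim : Tendsto (fun y => ∫⁻ z, ‖g (z - y) - g z‖ₑ ∂μ + ‖y‖ₑ * ∫⁻ z, ‖f z‖ₑ ∂μ)
      (𝓝 0) (𝓝 0) := by
    have hnorm : Tendsto (fun y : E => ‖y‖ₑ) (𝓝 0) (𝓝 0) := by
      simpa using (continuous_enorm (E := E)).tendsto 0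
    simpa using (tendsto_lintegral_enorm_translate_sub hg).add
      (ENNReal.Tendsto.mul_const hnorm (.inr hfint))
  exact tendsto_of_tendsto_of_tendsto_of_le_of_le tendsto_const_nhds hlim (fun _ => zero_le) hbound

lemma tendsto_firstMomentNorm_translate_sub [BorelSpace E] [SecondCountableTopology E]
    [NormedSpace ℝ F] {μ : Measure E} [μ.IsAddLeftInvariant] [IsLocallyFiniteMeasure μ]
    [μ.InnerRegularCompactLTTop] {f : E → F} (hf : StronglyMeasurable f)
    (hfm : firstMomentNorm μ f ≠ ∞) (x : E) :
    Tendsto (fun y => firstMomentNorm μ fun z => f (z - y) - f (z - x)) (𝓝 x) (𝓝 0) := by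
  have hshift : Tendsto (fun y => y - x) (𝓝 x) (𝓝 0) := by
    simpa using (continuous_sub_right x).tendsto x
  have htranslate := tendsto_firstMomentNorm_translate_sub_self
    (hf.comp_measurable (measurable_id.sub_const x)) (firstMomentNorm_translate_ne_top hfm x)
  simpa [Function.comp_def, sub_sub] using htranslate.comp hshift

end FirstMomentNorm

section LocationMixture

variable {X E F : Type*} [MeasurableSpace X] [NormedAddCommGroup E] [MeasurableSpace E]
  [NormedAddCommGroup F]

lemma stronglyMeasurable_uncurry_translate [BorelSpace E] [SecondCountableTopology E] {S : X → E}
    (hS : Measurable S) {f : E → F} (hf : StronglyMeasurable f) :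
    StronglyMeasurable (Function.uncurry fun x z => f (z - S x)) :=
  hf.comp_measurable (measurable_snd.sub (hS.comp measurable_fst))

lemma ae_integrable_translate [BorelSpace E] [SecondCountableTopology E] {μ : Measure E}
    [SFinite μ] [μ.IsAddRightInvariant] {P : Measure X} [IsFiniteMeasure P] {S : X → E}
    (hS : Measurable S) {f : E → F} (hf : Integrable f μ) :
    ∀ᵐ z ∂μ, Integrable (fun x => f (z - S x)) P := by
  have hshear : MeasurePreserving (fun p : X × E => (p.1, p.2 - S p.1)) (P.prod μ) (P.prod μ) :=
    (MeasurePreserving.id P).skew_product (measurable_snd.sub (hS.comp measurable_fst))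
      (ae_of_all _ fun x => (measurePreserving_sub_right μ (S x)).map_eq)
  exact (hshear.integrable_comp_of_integrable (hf.comp_snd P)).prod_left_ae

variable [NormedSpace ℝ F]

/-- The location mixture of the translates of `f`, whose random location is `S` under `P`: the
convolution of `f` with the law of `S`. Both `P` and `S` are kept so that a sequence of locations
can converge pointwise on one probability space. -/
noncomputable def locationMixture (P : Measure X) (S : X → E) (f : E → F) (z : E) : F :=
  ∫ x, f (z - S x) ∂P

lemma stronglyMeasurable_locationMixture [BorelSpace E] [SecondCountableTopology E]
    {P : Measure X} [SFinite P] {S : X → E} (hS : Measurable S) {f : E → F}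
    (hf : StronglyMeasurable f) : StronglyMeasurable (locationMixture P S f) :=
  (stronglyMeasurable_uncurry_translate hS hf).integral_prod_left

lemma firstMomentNorm_integral_le [BorelSpace E] {μ : Measure E} [SFinite μ] {P : Measure X}
    [SFinite P] {g : X → E → F} (hg : StronglyMeasurable (Function.uncurry g)) :
    firstMomentNorm μ (fun z => ∫ x, g x z ∂P) ≤ ∫⁻ x, firstMomentNorm μ (g x) ∂P := by
  have hmeas : Measurable (Function.uncurry fun x z => (1 + ‖z‖ₑ) * ‖g x z‖ₑ) :=
    (by fun_prop : Measurable fun p : X × E => 1 + ‖p.2‖ₑ).mul hg.enorm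
  simp only [firstMomentNorm]
  rw [lintegral_lintegral_swap hmeas.aemeasurable]
  refine lintegral_mono fun z => ?_
  rw [lintegral_const_mul' _ _ (by finiteness)]
  gcongr
  exact enorm_integral_le_lintegral_enorm _

lemma firstMomentNorm_locationMixture_sub_le [BorelSpace E] [SecondCountableTopology E]
    {μ : Measure E} [SFinite μ] [μ.IsAddRightInvariant] {P : Measure X} [IsFiniteMeasure P]
    {S T : X → E} (hS : Measurable S) (hT : Measurable T) {f : E → F} (hf : StronglyMeasurable f)
    (hfint : Integrable f μ) :
    firstMomentNorm μ (locationMixture P S f - locationMixture P T f) ≤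
      ∫⁻ x, firstMomentNorm μ (fun z => f (z - S x) - f (z - T x)) ∂P := by
  have hdiff : firstMomentNorm μ (locationMixture P S f - locationMixture P T f) =
      firstMomentNorm μ fun z => ∫ x, (f (z - S x) - f (z - T x)) ∂P := by
    refine lintegral_congr_ae ?_
    filter_upwards [ae_integrable_translate (P := P) hS hfint,
      ae_integrable_translate (P := P) hT hfint] with z hSz hTz
    rw [integral_sub hSz hTz]
    rfl
  rw [hdiff]
  exact firstMomentNorm_integral_le
    ((stronglyMeasurable_uncurry_translate hS hf).sub (stronglyMeasurable_uncurry_translate hT hf))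

theorem tendsto_locationMixture [BorelSpace E] [SecondCountableTopology E] {μ : Measure E}
    [SFinite μ] [μ.IsAddLeftInvariant] [IsLocallyFiniteMeasure μ] [μ.InnerRegularCompactLTTop]
    {P : Measure X} [IsFiniteMeasure P] {ι : Type*} {l : Filter ι} [l.IsCountablyGenerated]
    {S : ι → X → E} {T : X → E} (hS : ∀ n, Measurable (S n)) (hT : Measurable T)
    (hlim : ∀ x, Tendsto (fun n => S n x) l (𝓝 (T x))) {B : X → ℝ≥0∞}
    (hSB : ∀ᶠ n in l, ∀ x, ‖S n x‖ₑ ≤ B x) (hTB : ∀ x, ‖T x‖ₑ ≤ B x) (hB : ∫⁻ x, B x ∂P ≠ ∞)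
    {f : E → F} (hf : StronglyMeasurable f) (hfm : firstMomentNorm μ f ≠ ∞) :
    Tendsto (fun n => firstMomentNorm μ (locationMixture P (S n) f - locationMixture P T f))
      l (𝓝 0) := by
  have hfint := integrable_of_firstMomentNorm_ne_top hf.aestronglyMeasurable hfm
  set G : ι → X → ℝ≥0∞ := fun n x => firstMomentNorm μ fun z => f (z - S n x) - f (z - T x)
  have hGmeas (n : ι) : Measurable (G n) :=
    ((by fun_prop : Measurable fun p : X × E => 1 + ‖p.2‖ₑ).mul
      ((stronglyMeasurable_uncurry_translate (hS n) hf).sub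
        (stronglyMeasurable_uncurry_translate hT hf)).enorm).lintegral_prod_right'
  have hGle : ∀ᶠ n in l, ∀ᵐ x ∂P, G n x ≤ 2 * (1 + B x) * firstMomentNorm μ f := by
    filter_upwards [hSB] with n hn
    refine ae_of_all _ fun x => ?_
    calc G n x ≤ firstMomentNorm μ (fun z => f (z - S n x)) +
          firstMomentNorm μ (fun z => f (z - T x)) :=
          firstMomentNorm_sub_le
            (hf.comp_measurable (measurable_id.sub_const _)).aestronglyMeasurable _
      _ ≤ (1 + ‖S n x‖ₑ) * firstMomentNorm μ f + (1 + ‖T x‖ₑ) * firstMomentNorm μ f :=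
          add_le_add (firstMomentNorm_translate_le f _) (firstMomentNorm_translate_le f _)
      _ ≤ (1 + B x) * firstMomentNorm μ f + (1 + B x) * firstMomentNorm μ f := by
          gcongr
          exacts [hn x, hTB x]
      _ = 2 * (1 + B x) * firstMomentNorm μ f := by ring
  have hbound : ∫⁻ x, 2 * (1 + B x) * firstMomentNorm μ f ∂P ≠ ∞ := by
    rw [lintegral_mul_const' _ _ hfm, lintegral_const_mul' _ _ (by finiteness),
      lintegral_add_left measurable_const, lintegral_one]
    finiteness
  have hGlim := tendsto_lintegral_filter_of_dominated_convergence _ (.of_forall hGmeas) hGle hbound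
    (ae_of_all P fun x => (tendsto_firstMomentNorm_translate_sub hf hfm (T x)).comp (hlim x))
  rw [lintegral_zero] at hGlim
  exact tendsto_of_tendsto_of_tendsto_of_le_of_le tendsto_const_nhds hGlim (fun _ => zero_le)
    fun n => firstMomentNorm_locationMixture_sub_le (hS n) hT hf hfint

end LocationMixture

section Density

variable {E : Type*} [NormedAddCommGroup E] [MeasurableSpace E] {μ : Measure E} {f : E → ℝ}

/-- `f` is a probability density with respect to `μ` of a distribution with finite first moment. -/
structure IsFirstMomentDensity (μ : Measure E) (f : E → ℝ) : Prop where
  measurable : Measurable f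
  nonneg : ∀ z, 0 ≤ f z
  integral_eq_one : ∫ z, f z ∂μ = 1
  firstMomentNorm_ne_top : firstMomentNorm μ f ≠ ∞

/-- The distribution with density `f`; negative values of `f` are truncated to `0`. -/
noncomputable def densityMeasure (μ : Measure E) (f : E → ℝ) : Measure E :=
  μ.withDensity fun z => ENNReal.ofReal (f z)

namespace IsFirstMomentDensity

lemma integrable (hf : IsFirstMomentDensity μ f) : Integrable f μ :=
  .of_integral_ne_zero (by rw [hf.integral_eq_one]; exact one_ne_zero)

lemma isProbabilityMeasure_densityMeasure (hf : IsFirstMomentDensity μ f) :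
    IsProbabilityMeasure (densityMeasure μ f) := by
  constructor
  rw [densityMeasure, withDensity_apply _ .univ, Measure.restrict_univ,
    ← ofReal_integral_eq_lintegral_ofReal hf.integrable (ae_of_all _ hf.nonneg),
    hf.integral_eq_one, ENNReal.ofReal_one]

lemma integral_densityMeasure (hf : IsFirstMomentDensity μ f) {F : Type*} [NormedAddCommGroup F]
    [NormedSpace ℝ F] (g : E → F) : ∫ x, g x ∂densityMeasure μ f = ∫ x, f x • g x ∂μ := by
  rw [densityMeasure, integral_withDensity_eq_integral_toReal_smul hf.measurable.ennreal_ofReal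
    (ae_of_all _ fun _ => ENNReal.ofReal_lt_top)]
  simp only [ENNReal.toReal_ofReal (hf.nonneg _)]

lemma lintegral_enorm_densityMeasure_ne_top [BorelSpace E] (hf : IsFirstMomentDensity μ f) :
    ∫⁻ x, ‖x‖ₑ ∂densityMeasure μ f ≠ ∞ := by
  rw [densityMeasure, lintegral_withDensity_eq_lintegral_mul _ hf.measurable.ennreal_ofReal
    measurable_enorm]
  refine ne_top_of_le_ne_top hf.firstMomentNorm_ne_top
    (le_trans (lintegral_mono fun x => ?_) (lintegral_enorm_mul_enorm_le_firstMomentNorm μ f))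
  rw [Pi.mul_apply, mul_comm, Real.enorm_of_nonneg (hf.nonneg x)]

end IsFirstMomentDensity

end Density

section Dilation

variable {E : Type*} [NormedAddCommGroup E] [NormedSpace ℝ E]

/-- The density of `σ • Z` when `Z` has density `K`, for a scale `σ > 0`. -/
noncomputable def dilatedDensity (σ : ℝ) (K : E → ℝ) (z : E) : ℝ :=
  (σ ^ Module.finrank ℝ E)⁻¹ * K (σ⁻¹ • z)

variable [MeasurableSpace E] [BorelSpace E] {K : E → ℝ} {σ : ℝ}

lemma measurable_dilatedDensity (hK : Measurable K) (σ : ℝ) : Measurable (dilatedDensity σ K) :=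
  (hK.comp (measurable_const_smul σ⁻¹)).const_mul _

variable [FiniteDimensional ℝ E] {μ : Measure E} [μ.IsAddHaarMeasure]

lemma firstMomentNorm_dilatedDensity_ne_top (hK : Measurable K) (hKm : firstMomentNorm μ K ≠ ∞)
    (hσ : 0 < σ) : firstMomentNorm μ (dilatedDensity σ K) ≠ ∞ := by
  have hdil := (measurable_dilatedDensity hK σ).aestronglyMeasurable (μ := μ)
  rw [← integrable_one_add_norm_smul_iff hdil]
  have hKint := (integrable_one_add_norm_smul_iff hK.aestronglyMeasurable).2 hKm
  refine ((hKint.comp_smul (inv_ne_zero hσ.ne')).const_mul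
    ((1 + σ) * (σ ^ Module.finrank ℝ E)⁻¹)).mono (by fun_prop) (ae_of_all _ fun z => ?_)
  have hweight : 1 + ‖z‖ ≤ (1 + σ) * (1 + ‖σ⁻¹ • z‖) := by
    have hz : ‖z‖ = σ * ‖σ⁻¹ • z‖ := by
      rw [norm_smul, norm_inv, Real.norm_of_nonneg hσ.le, mul_inv_cancel_left₀ hσ.ne']
    nlinarith [norm_nonneg (σ⁻¹ • z)]
  have hz : 0 ≤ 1 + ‖z‖ := by positivity
  have hz' : 0 ≤ 1 + ‖σ⁻¹ • z‖ := by positivity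
  simp only [dilatedDensity, smul_eq_mul, norm_mul, Real.norm_of_nonneg hz,
    Real.norm_of_nonneg hz', Real.norm_of_nonneg (by positivity : 0 ≤ 1 + σ)]
  calc (1 + ‖z‖) * (‖(σ ^ Module.finrank ℝ E)⁻¹‖ * ‖K (σ⁻¹ • z)‖)
      ≤ (1 + σ) * (1 + ‖σ⁻¹ • z‖) * (‖(σ ^ Module.finrank ℝ E)⁻¹‖ * ‖K (σ⁻¹ • z)‖) := by gcongr
    _ = _ := by ring

-- Both sides are the convolution of `f` with the law of `σ • Z`, where `Z` has density `K`.
lemma locationMixture_smul_eq_locationMixture_dilatedDensity {f : E → ℝ}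
    (hf : IsFirstMomentDensity μ f) (hK : IsFirstMomentDensity μ K) (hσ : 0 < σ) :
    locationMixture (densityMeasure μ K) (σ • ·) f =
      locationMixture (densityMeasure μ f) id (dilatedDensity σ K) := by
  ext z
  calc locationMixture (densityMeasure μ K) (σ • ·) f z
      = ∫ u, K u * f (z - σ • u) ∂μ := hK.integral_densityMeasure _
    _ = (σ ^ Module.finrank ℝ E)⁻¹ * ∫ u, K (σ⁻¹ • u) * f (z - σ • σ⁻¹ • u) ∂μ := by
        rw [Measure.integral_comp_inv_smul_of_nonneg μ (fun u => K u * f (z - σ • u)) hσ.le,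
          smul_eq_mul, inv_mul_cancel_left₀ (by positivity)]
    _ = ∫ u, f (z - u) * dilatedDensity σ K u ∂μ := by
        rw [← integral_const_mul]
        simp only [smul_inv_smul₀ hσ.ne', dilatedDensity]
        congr with u
        ring
    _ = ∫ x, f x * dilatedDensity σ K (z - x) ∂μ := by
        simpa using integral_sub_left_eq_self (fun x => f x * dilatedDensity σ K (z - x)) μ z
    _ = locationMixture (densityMeasure μ f) id (dilatedDensity σ K) z :=
        (hf.integral_densityMeasure _).symm

theorem tendsto_locationMixture_dilatedDensity {f : E → ℝ} (hf : IsFirstMomentDensity μ f)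
    (hK : IsFirstMomentDensity μ K) :
    Tendsto (fun σ => firstMomentNorm μ
      (locationMixture (densityMeasure μ f) id (dilatedDensity σ K) - f)) (𝓝[>] 0) (𝓝 0) := by
  have := hK.isProbabilityMeasure_densityMeasure
  have hzero : locationMixture (densityMeasure μ K) (fun _ => 0) f = f := by
    ext z
    simp [locationMixture]
  have hshrink (x : E) : Tendsto (fun σ : ℝ => σ • x) (𝓝[>] 0) (𝓝 0) := by
    have hcont : Continuous fun σ : ℝ => σ • x := by fun_prop
    simpa using (hcont.tendsto 0).mono_left nhdsWithin_le_nhds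
  have hlim := tendsto_locationMixture (μ := μ) (P := densityMeasure μ K) (l := 𝓝[>] (0 : ℝ))
    (S := fun σ x => σ • x) (T := fun _ => 0) (B := fun x => ‖x‖ₑ)
    (fun σ => measurable_const_smul σ) measurable_const
    hshrink ?_ (by simp) hK.lintegral_enorm_densityMeasure_ne_top hf.measurable.stronglyMeasurable
    hf.firstMomentNorm_ne_top
  · rw [hzero] at hlim
    refine hlim.congr' ?_
    filter_upwards [self_mem_nhdsWithin] with σ hσ
    rw [locationMixture_smul_eq_locationMixture_dilatedDensity hf hK hσ]
  · filter_upwards [Ioc_mem_nhdsGT one_pos] with σ hσ x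
    rw [enorm_smul]
    refine mul_le_of_le_one_left' ?_
    rw [Real.enorm_of_nonneg hσ.1.le]
    exact ENNReal.ofReal_le_one.2 hσ.2

end Dilation

section FiniteMixture

variable {X E F : Type*} [MeasurableSpace X] [NormedAddCommGroup F] [NormedSpace ℝ F]
  [CompleteSpace F]

lemma integral_comp_simpleFunc (P : Measure X) [IsFiniteMeasure P] (s : SimpleFunc X E)
    (g : E → F) : ∫ x, g (s x) ∂P = ∑ y ∈ s.range, P.real (s ⁻¹' {y}) • g y := by
  classical
  have hfiber (x : X) : g (s x) = ∑ y ∈ s.range, (s ⁻¹' {y}).indicator (fun _ => g y) x := by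
    simp [Set.indicator_apply]
  simp_rw [hfiber]
  rw [integral_finsetSum _ fun y _ =>
    (integrable_const (g y)).indicator (s.measurableSet_fiber y)]
  simp_rw [integral_indicator_const _ (s.measurableSet_fiber _)]

lemma exists_stdSimplex_integral_comp_simpleFunc (P : Measure X) [IsProbabilityMeasure P]
    (s : SimpleFunc X E) :
    ∃ m, ∃ ω ∈ stdSimplex ℝ (Fin m), ∃ y : Fin m → E, ∀ g : E → F,
      ∫ x, g (s x) ∂P = ∑ j, ω j • g (y j) := by
  let e := s.range.equivFin
  refine ⟨s.range.card, fun j => P.real (s ⁻¹' {(e.symm j : E)}),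
    ⟨fun _ => measureReal_nonneg, ?_⟩, fun j => e.symm j, fun g => ?_⟩
  · rw [e.symm.sum_comp fun y : s.range => P.real (s ⁻¹' {(y : E)}),
      Finset.sum_coe_sort s.range fun y => P.real (s ⁻¹' {y})]
    simpa using (integral_comp_simpleFunc P s fun _ => (1 : ℝ)).symm
  · rw [e.symm.sum_comp fun y : s.range => P.real (s ⁻¹' {(y : E)}) • g y,
      Finset.sum_coe_sort s.range fun y => P.real (s ⁻¹' {y}) • g y, integral_comp_simpleFunc]

end FiniteMixture

theorem exists_finite_mixture_firstMomentNorm_lt {E F : Type*} [NormedAddCommGroup E]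
    [MeasurableSpace E] [BorelSpace E] [SecondCountableTopology E] [NormedAddCommGroup F]
    [NormedSpace ℝ F] [CompleteSpace F] {μ : Measure E} [SFinite μ] [μ.IsAddLeftInvariant]
    [IsLocallyFiniteMeasure μ] [μ.InnerRegularCompactLTTop] {P : Measure E}
    [IsProbabilityMeasure P] (hP : ∫⁻ x, ‖x‖ₑ ∂P ≠ ∞) {f : E → F} (hf : StronglyMeasurable f)
    (hfm : firstMomentNorm μ f ≠ ∞) {ε : ℝ≥0∞} (hε : 0 < ε) :
    ∃ m, ∃ ω ∈ stdSimplex ℝ (Fin m), ∃ y : Fin m → E,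
      firstMomentNorm μ ((fun z => ∑ j, ω j • f (z - y j)) - locationMixture P id f) < ε := by
  let s (n : ℕ) : SimpleFunc E E := .approxOn id measurable_id .univ 0 (Set.mem_univ 0) n
  have hs (x : E) : Tendsto (fun n => s n x) atTop (𝓝 x) :=
    SimpleFunc.tendsto_approxOn measurable_id (Set.mem_univ 0) (by simp)
  have hsnorm (n : ℕ) (x : E) : ‖s n x‖ₑ ≤ 2 * ‖x‖ₑ := by
    have hnorm : ‖s n x‖ ≤ ‖x‖ + ‖x‖ :=
      SimpleFunc.norm_approxOn_zero_le measurable_id (Set.mem_univ 0) x n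
    rw [two_mul, ← ofReal_norm, ← ofReal_norm, ← ENNReal.ofReal_add (by positivity) (by positivity)]
    exact ENNReal.ofReal_le_ofReal hnorm
  have hbound : ∫⁻ x, 2 * ‖x‖ₑ ∂P ≠ ∞ := by
    rw [lintegral_const_mul' _ _ (by finiteness)]
    finiteness
  have hlim := tendsto_locationMixture (μ := μ) (P := P) (fun n => (s n).measurable) measurable_id
    hs (.of_forall hsnorm) (fun x => le_mul_of_one_le_left' one_le_two) hbound hf hfm
  obtain ⟨n, hn⟩ := (hlim.eventually_lt_const hε).exists
  obtain ⟨m, ω, hω, y, hmix⟩ := exists_stdSimplex_integral_comp_simpleFunc (F := F) P (s n)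
  refine ⟨m, ω, hω, y, ?_⟩
  have heq : (fun z => ∑ j, ω j • f (z - y j)) = locationMixture P (s n) f :=
    funext fun z => (hmix fun v => f (z - v)).symm
  rwa [heq]

theorem exists_finite_dilated_mixture_firstMomentNorm_lt {E : Type*} [NormedAddCommGroup E]
    [NormedSpace ℝ E] [FiniteDimensional ℝ E] [MeasurableSpace E] [BorelSpace E] {μ : Measure E}
    [μ.IsAddHaarMeasure] {f K : E → ℝ} (hf : IsFirstMomentDensity μ f)
    (hK : IsFirstMomentDensity μ K) {ε : ℝ≥0∞} (hε : 0 < ε) :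
    ∃ σ : ℝ, 0 < σ ∧ ∃ m, ∃ ω ∈ stdSimplex ℝ (Fin m), ∃ y : Fin m → E,
      firstMomentNorm μ (fun z => f z - ∑ j, ω j * dilatedDensity σ K (z - y j)) < ε := by
  have := hf.isProbabilityMeasure_densityMeasure
  have hε2 : 0 < ε / 2 := ENNReal.half_pos hε.ne'
  obtain ⟨σ, hσclose, hσ⟩ := (((tendsto_locationMixture_dilatedDensity hf hK).eventually_lt_const
    hε2).and self_mem_nhdsWithin).exists
  have hKσ := (measurable_dilatedDensity hK.measurable σ).stronglyMeasurable
  obtain ⟨m, ω, hω, y, hmix⟩ := exists_finite_mixture_firstMomentNorm_lt (μ := μ)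
    hf.lintegral_enorm_densityMeasure_ne_top hKσ
    (firstMomentNorm_dilatedDensity_ne_top hK.measurable hK.firstMomentNorm_ne_top hσ) hε2
  refine ⟨σ, hσ, m, ω, hω, y, ?_⟩
  set g := locationMixture (densityMeasure μ f) id (dilatedDensity σ K)
  set h : E → ℝ := fun z => ∑ j, ω j • dilatedDensity σ K (z - y j)
  have hmeas : AEStronglyMeasurable (g - f) μ :=
    ((stronglyMeasurable_locationMixture measurable_id hKσ).sub
      hf.measurable.stronglyMeasurable).aestronglyMeasurable
  calc firstMomentNorm μ (f - h) = firstMomentNorm μ ((g - f) + (h - g)) := by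
        rw [← firstMomentNorm_neg, neg_sub]
        congr 1
        abel
    _ ≤ firstMomentNorm μ (g - f) + firstMomentNorm μ (h - g) := firstMomentNorm_add_le hmeas _
    _ < ε / 2 + ε / 2 := ENNReal.add_lt_add hσclose hmix
    _ = ε := ENNReal.add_halves ε

section Product

variable {ι : Type*} [Fintype ι]

lemma one_add_norm_le_prod_one_add_abs (z : ι → ℝ) : 1 + ‖z‖ ≤ ∏ i, (1 + |z i|) := by
  have hone : 1 ≤ ∏ i, (1 + |z i|) := Finset.one_le_prod fun i _ => by simp
  rw [← le_sub_iff_add_le', pi_norm_le_iff_of_nonneg (sub_nonneg.2 hone)]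
  intro i
  rw [le_sub_iff_add_le', Real.norm_eq_abs, ← Finset.prod_singleton (fun i => 1 + |z i|) i]
  exact Finset.prod_le_prod_of_subset_of_one_le (Finset.subset_univ _)
    (fun _ _ => by positivity) fun _ _ _ => by simp

lemma IsFirstMomentDensity.pi {g : ι → ℝ → ℝ} (hg : ∀ i, IsFirstMomentDensity volume (g i)) :
    IsFirstMomentDensity volume fun z : ι → ℝ => ∏ i, g i (z i) := by
  have hmeas : Measurable fun z : ι → ℝ => ∏ i, g i (z i) :=
    Finset.measurable_fun_prod _ fun i _ => (hg i).measurable.comp (measurable_pi_apply i)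
  have hnonneg (z : ι → ℝ) : 0 ≤ ∏ i, g i (z i) := Finset.prod_nonneg fun i _ => (hg i).nonneg _
  refine ⟨hmeas, hnonneg, ?_, ?_⟩
  · simp only [integral_fintype_prod_volume_eq_prod, (hg _).integral_eq_one, Finset.prod_const_one]
  · rw [← integrable_one_add_norm_smul_iff hmeas.aestronglyMeasurable]
    have hmarginal (i : ι) : Integrable fun x : ℝ => (1 + |x|) * g i x :=
      (integrable_one_add_norm_smul_iff (hg i).measurable.aestronglyMeasurable).2
        (hg i).firstMomentNorm_ne_top
    refine (Integrable.fintype_prod hmarginal).mono' (by fun_prop) (ae_of_all _ fun z => ?_)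
    rw [Finset.prod_mul_distrib, smul_eq_mul,
      Real.norm_of_nonneg (mul_nonneg (by positivity) (hnonneg z))]
    exact mul_le_mul_of_nonneg_right (one_add_norm_le_prod_one_add_abs z) (hnonneg z)

end Product

section Gumbel

lemma integrable_exp_neg_mul_abs {b : ℝ} (hb : 0 < b) :
    Integrable fun x : ℝ => Real.exp (-b * |x|) := by
  have hint : ∫ x : ℝ, Real.exp (-b * |x|) = 2 / b := by
    rw [integral_comp_abs (f := fun x => Real.exp (-b * x)),
      integral_exp_mul_Ioi (neg_neg_of_pos hb), mul_zero, Real.exp_zero, neg_div_neg_eq,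
      mul_one_div]
  exact .of_integral_ne_zero (by rw [hint]; positivity)

lemma integrable_one_add_abs_mul_exp_neg_abs :
    Integrable fun x : ℝ => (1 + |x|) * Real.exp (-|x|) := by
  have hexp : Integrable fun x : ℝ => 2 * Real.exp (-(1 / 2) * |x|) :=
    (integrable_exp_neg_mul_abs (by norm_num)).const_mul 2
  refine hexp.mono' (by fun_prop) (ae_of_all _ fun x => ?_)
  rw [Real.norm_of_nonneg (by positivity)]
  calc (1 + |x|) * Real.exp (-|x|) ≤ 2 * Real.exp (|x| / 2) * Real.exp (-|x|) := by
        gcongr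
        linarith [Real.add_one_le_exp (|x| / 2)]
    _ = 2 * Real.exp (-(1 / 2) * |x|) := by
        rw [mul_assoc, ← Real.exp_add]
        ring_nf

lemma continuous_gumbelPdf : Continuous gumbelPdf := by
  unfold gumbelPdf
  fun_prop

lemma gumbelPdf_nonneg (z : ℝ) : 0 ≤ gumbelPdf z := (Real.exp_pos _).le

lemma gumbelPdf_le (z : ℝ) :
    gumbelPdf z ≤ Real.exp |Real.eulerMascheroniConstant| * Real.exp (-|z|) := by
  have hexp (t : ℝ) : |t| ≤ t + Real.exp (-t) := by
    rw [abs_le']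
    constructor
    · linarith [Real.exp_pos (-t)]
    · rcases le_total 0 t with ht | ht
      · linarith [Real.exp_pos (-t)]
      · nlinarith [Real.quadratic_le_exp_of_nonneg (neg_nonneg.2 ht), sq_nonneg (-t - 1)]
  have htriangle := abs_sub (z + Real.eulerMascheroniConstant) Real.eulerMascheroniConstant
  rw [add_sub_cancel_right] at htriangle
  rw [gumbelPdf, ← Real.exp_add, Real.exp_le_exp]
  linarith [hexp (z + Real.eulerMascheroniConstant)]

lemma firstMomentNorm_gumbelPdf_ne_top : firstMomentNorm volume gumbelPdf ≠ ∞ := by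
  rw [← integrable_one_add_norm_smul_iff continuous_gumbelPdf.aestronglyMeasurable]
  refine (integrable_one_add_abs_mul_exp_neg_abs.const_mul
    (Real.exp |Real.eulerMascheroniConstant|)).mono'
    ((by fun_prop : Continuous fun z : ℝ => 1 + ‖z‖).smul
      continuous_gumbelPdf).aestronglyMeasurable (ae_of_all _ fun z => ?_)
  rw [smul_eq_mul, Real.norm_of_nonneg (mul_nonneg (by positivity) (gumbelPdf_nonneg z)),
    Real.norm_eq_abs, mul_left_comm]
  gcongr
  exact gumbelPdf_le z

lemma hasDerivAt_exp_neg_exp_neg_add_const (z : ℝ) :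
    HasDerivAt (fun z => Real.exp (-Real.exp (-(z + Real.eulerMascheroniConstant))))
      (gumbelPdf z) z := by
  refine ((hasDerivAt_id z).add_const _).fun_neg.exp.fun_neg.exp.congr_deriv ?_
  simp only [gumbelPdf, id]
  rw [mul_neg_one, neg_neg, ← Real.exp_add]
  ring_nf

lemma integral_gumbelPdf : ∫ z, gumbelPdf z = 1 := by
  have hint := integrable_of_firstMomentNorm_ne_top continuous_gumbelPdf.aestronglyMeasurable
    firstMomentNorm_gumbelPdf_ne_top
  have hbot : Tendsto (fun z => Real.exp (-Real.exp (-(z + Real.eulerMascheroniConstant))))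
      atBot (𝓝 0) :=
    Real.tendsto_exp_neg_atTop_nhds_zero.comp (Real.tendsto_exp_atTop.comp
      (tendsto_neg_atBot_atTop.comp (tendsto_atBot_add_const_right _ _ tendsto_id)))
  have htop : Tendsto (fun z => Real.exp (-Real.exp (-(z + Real.eulerMascheroniConstant))))
      atTop (𝓝 1) := by
    have hinner : Tendsto (fun z => Real.exp (-(z + Real.eulerMascheroniConstant))) atTop (𝓝 0) :=
      Real.tendsto_exp_neg_atTop_nhds_zero.comp (tendsto_atTop_add_const_right _ _ tendsto_id)
    simpa [Function.comp_def] using (Real.continuous_exp.tendsto _).comp hinner.neg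
  rw [integral_of_hasDerivAt_of_tendsto hasDerivAt_exp_neg_exp_neg_add_const hint hbot htop,
    sub_zero]

lemma isFirstMomentDensity_gumbelPdf : IsFirstMomentDensity volume gumbelPdf where
  measurable := continuous_gumbelPdf.measurable
  nonneg := gumbelPdf_nonneg
  integral_eq_one := integral_gumbelPdf
  firstMomentNorm_ne_top := firstMomentNorm_gumbelPdf_ne_top

lemma mGumbelPdf_eq_dilatedDensity {I : ℕ} (μ : Fin I → ℝ) (σ : ℝ) (z : Fin I → ℝ) :
    mGumbelPdf μ σ z = dilatedDensity σ (fun x => ∏ j, gumbelPdf (x j)) (z - μ) := by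
  simp [mGumbelPdf, dilatedDensity, Finset.prod_mul_distrib, div_eq_inv_mul]

end Gumbel

section EquivalentWeights

lemma norm_le_euclNorm {I : ℕ} (z : Fin I → ℝ) : ‖z‖ ≤ euclNorm z :=
  (pi_norm_le_iff_of_nonneg (Real.sqrt_nonneg _)).2 fun i => Real.abs_le_sqrt
    (Finset.single_le_sum (f := fun i => z i ^ 2) (fun _ _ => sq_nonneg _) (Finset.mem_univ i))

lemma isFirstMomentDensity_of_integrable_euclNorm_mul {I : ℕ} {f : (Fin I → ℝ) → ℝ}
    (hfmeas : Measurable f) (hfnonneg : ∀ z, 0 ≤ f z) (hfprob : ∫ z, f z = 1)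
    (hfmom : Integrable fun z => euclNorm z * f z) : IsFirstMomentDensity volume f := by
  refine ⟨hfmeas, hfnonneg, hfprob, ?_⟩
  rw [← integrable_one_add_norm_smul_iff hfmeas.aestronglyMeasurable]
  have hfint : Integrable f := .of_integral_ne_zero (by rw [hfprob]; exact one_ne_zero)
  refine (hfint.add hfmom).mono' (by fun_prop) (ae_of_all _ fun z => ?_)
  rw [smul_eq_mul, Real.norm_of_nonneg (mul_nonneg (by positivity) (hfnonneg z)), add_mul, one_mul]
  exact add_le_add_right (mul_le_mul_of_nonneg_right (norm_le_euclNorm z) (hfnonneg z)) _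

variable {ι : Type*} [Fintype ι]

lemma one_add_sum_abs_mul_abs_le (z : ι → ℝ) (a : ℝ) :
    (1 + ∑ i, |z i|) * |a| ≤ (Fintype.card ι + 1) * ‖(1 + ‖z‖) • a‖ := by
  have hsum : ∑ i, |z i| ≤ Fintype.card ι * ‖z‖ := by
    simpa using Pi.sum_norm_apply_le_norm z
  rw [norm_smul, Real.norm_of_nonneg (by positivity), ← mul_assoc, Real.norm_eq_abs]
  gcongr
  linarith [norm_nonneg z, (Fintype.card ι).cast_nonneg (α := ℝ)]

lemma integrable_one_add_sum_abs_mul_abs {g : (ι → ℝ) → ℝ} (hg : AEStronglyMeasurable g)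
    (hgm : firstMomentNorm volume g ≠ ∞) :
    Integrable fun z => (1 + ∑ i, |z i|) * |g z| := by
  have hweight : Continuous fun z : ι → ℝ => 1 + ∑ i, |z i| := by fun_prop
  have hnorm := (integrable_one_add_norm_smul_iff hg).2 hgm
  refine (hnorm.norm.const_mul (Fintype.card ι + 1 : ℝ)).mono'
    (hweight.aestronglyMeasurable.mul hg.norm) (ae_of_all _ fun z => ?_)
  rw [Real.norm_of_nonneg (by positivity)]
  exact one_add_sum_abs_mul_abs_le z (g z)

lemma integral_one_add_sum_abs_mul_abs_le {g : (ι → ℝ) → ℝ} (hg : AEStronglyMeasurable g)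
    (hgm : firstMomentNorm volume g ≠ ∞) :
    ∫ z, (1 + ∑ i, |z i|) * |g z| ≤ (Fintype.card ι + 1) * (firstMomentNorm volume g).toReal := by
  have hnorm := (integrable_one_add_norm_smul_iff hg).2 hgm
  calc ∫ z, (1 + ∑ i, |z i|) * |g z|
      ≤ ∫ z, (Fintype.card ι + 1) * ‖(1 + ‖z‖) • g z‖ :=
        integral_mono (integrable_one_add_sum_abs_mul_abs hg hgm) (hnorm.norm.const_mul _)
          fun z => one_add_sum_abs_mul_abs_le z (g z)
    _ = (Fintype.card ι + 1) * (firstMomentNorm volume g).toReal := by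
        rw [integral_const_mul, integral_norm_eq_lintegral_enorm hnorm.aestronglyMeasurable]
        simp only [enorm_smul, ← one_add_enorm_eq_enorm, firstMomentNorm]

end EquivalentWeights

theorem approx_by_gumbel_mixtures_general (I : ℕ) (f : (Fin I → ℝ) → ℝ) (hfmeas : Measurable f)
    (hfnonneg : ∀ z, 0 ≤ f z) (hfprob : ∫ z, f z = 1)
    (hfmom : Integrable fun z : Fin I → ℝ => euclNorm z * f z) :
    ∀ δ : ℝ, 0 < δ →
      ∃ (m : ℕ) (ω : Fin m → ℝ) (μ : Fin m → Fin I → ℝ) (σ : ℝ),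
        1 ≤ m ∧ (∀ j, 0 ≤ ω j ∧ ω j ≤ 1) ∧ (∑ j, ω j = 1) ∧ 0 < σ ∧
        Integrable (fun z : Fin I → ℝ =>
          (1 + ∑ i, |z i|) * |f z - ∑ j, ω j * mGumbelPdf (μ j) σ z|) ∧
        (∫ z : Fin I → ℝ, (1 + ∑ i, |z i|) * |f z - ∑ j, ω j * mGumbelPdf (μ j) σ z|) < δ := by
  intro δ hδ
  have hf := isFirstMomentDensity_of_integrable_euclNorm_mul hfmeas hfnonneg hfprob hfmom
  have hK := IsFirstMomentDensity.pi fun _ : Fin I => isFirstMomentDensity_gumbelPdf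
  obtain ⟨σ, hσ, m, ω, hω, y, hclose⟩ := exists_finite_dilated_mixture_firstMomentNorm_lt hf hK
    (ENNReal.ofReal_pos.2 (by positivity : 0 < δ / (Fintype.card (Fin I) + 1)))
  have hmeas : AEStronglyMeasurable fun z =>
      f z - ∑ j, ω j * dilatedDensity σ (fun x => ∏ i, gumbelPdf (x i)) (z - y j) := by
    have hKσ := measurable_dilatedDensity hK.measurable σ
    fun_prop
  have hm : m ≠ 0 := by
    rintro rfl
    simpa using hω.2
  simp only [mGumbelPdf_eq_dilatedDensity]
  refine ⟨m, ω, y, σ, Nat.one_le_iff_ne_zero.2 hm, fun j => mem_Icc_of_mem_stdSimplex hω j, hω.2,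
    hσ, integrable_one_add_sum_abs_mul_abs hmeas hclose.ne_top, ?_⟩
  refine (integral_one_add_sum_abs_mul_abs_le hmeas hclose.ne_top).trans_lt ?_
  rw [← lt_div_iff₀' (by positivity)]
  exact (ENNReal.lt_ofReal_iff_toReal_lt hclose.ne_top).1 hclose

/-- Densities satisfying smoothness and moment conditions can be approximated arbitrarily
well by finite location-scale mixtures of Gumbels (with a common scale) in the distance
`ρ(f,g) = ∫ (1 + Σ_i |z_i|)|f(z) − g(z)| dz`. -/
theorem approx_by_gumbel_mixtures
    (I : ℕ) (hI : 1 ≤ I)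
    (f : (Fin I → ℝ) → ℝ)
    (hfmeas : Measurable f) (hfnonneg : ∀ z, 0 ≤ f z)
    (hfint : Integrable f) (hfprob : ∫ z, f z = 1)
    -- moment existence condition
    (hfmom : Integrable fun z : Fin I → ℝ => euclNorm z * f z)
    -- smoothness condition with envelope `L`
    (τ : ℝ) (hτ : 0 < τ) (L : (Fin I → ℝ) → ℝ) (hLnonneg : ∀ z, 0 ≤ L z)
    (hsmooth : ∀ z h : Fin I → ℝ,
      |f (z + h) - f z| ≤ euclNorm h * L z * Real.exp (τ * euclNorm h))
    (hLint : ∀ i : Fin I, Integrable fun z : Fin I → ℝ => (1 + |z i|) * L z) :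
    ∀ δ : ℝ, 0 < δ →
      ∃ (m : ℕ) (ω : Fin m → ℝ) (μ : Fin m → Fin I → ℝ) (σ : ℝ),
        1 ≤ m ∧ (∀ j, 0 ≤ ω j ∧ ω j ≤ 1) ∧ (∑ j, ω j = 1) ∧ 0 < σ ∧
        Integrable (fun z : Fin I → ℝ =>
          (1 + ∑ i, |z i|) * |f z - ∑ j, ω j * mGumbelPdf (μ j) σ z|) ∧
        (∫ z : Fin I → ℝ, (1 + ∑ i, |z i|) * |f z - ∑ j, ω j * mGumbelPdf (μ j) σ z|) < δ :=
  approx_by_gumbel_mixtures_general I f hfmeas hfnonneg hfprob hfmom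
end
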